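/- arXiv:2207.13935 — 3 statements merged into one kernel-verified Lean document; each statement's English description precedes it below -/
import Mathlib

section
/- Let F be a functor of Artin rings. (a) If F is smooth, then for every obstruction theory (V, v_e) for F, all the obstruction maps v_e are identically zero. (b) Conversely, if F admits a complete obstruction theory all of whose obstruction maps are identically zero, then F is smooth. -/
open CategoryTheory

universe u

/-- The category `Art_K` of commutative local Artinian `K`-algebras with residue field `K`. -/
structure ArtinAlg (K : Type u) [Field K] : Type (u + 1) where
  carrier : Type u
  [commRing : CommRing carrier]
  [algebra : Algebra K carrier]
  [artinian : IsArtinianRing carrier]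
  [localRing : IsLocalRing carrier]
  residue_bij : Function.Bijective
    ((IsLocalRing.residue carrier).comp (algebraMap K carrier))

attribute [instance] ArtinAlg.commRing ArtinAlg.algebra ArtinAlg.artinian ArtinAlg.localRing

instance (K : Type u) [Field K] : CoeSort (ArtinAlg K) (Type u) :=
  ⟨ArtinAlg.carrier⟩

instance (K : Type u) [Field K] : Category (ArtinAlg K) where
  Hom A B := A.carrier →ₐ[K] B.carrier
  id A := AlgHom.id K A.carrier
  comp f g := g.comp f

/-- Morphisms in `Art_K` are `K`-algebra homomorphisms. -/
def ArtinAlg.Hom.toAlgHom {K : Type u} [Field K] {A B : ArtinAlg K} (f : A ⟶ B) :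
    A.carrier →ₐ[K] B.carrier := f

instance {K : Type u} [Field K] {A B : ArtinAlg K} : FunLike (A ⟶ B) A B :=
  inferInstanceAs (FunLike (A.carrier →ₐ[K] B.carrier) A B)

instance {K : Type u} [Field K] {A B : ArtinAlg K} : AlgHomClass (A ⟶ B) K A B :=
  inferInstanceAs (AlgHomClass (A.carrier →ₐ[K] B.carrier) K A B)

/-- The field `K` itself, as the (terminal/initial) object of `Art_K`. -/
def ArtinAlg.self (K : Type u) [Field K] : ArtinAlg K where
  carrier := K
  residue_bij := by
    constructor
    · exact RingHom.injective _
    · intro y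
      obtain ⟨x, hx⟩ := Ideal.Quotient.mk_surjective (I := IsLocalRing.maximalIdeal K) y
      exact ⟨x, hx⟩

/-- A functor of Artin rings: a covariant functor `F : Art_K ⥤ Set` with `F(K)` a one-point
set. -/
def IsFunctorOfArtinRings {K : Type u} [Field K] (F : ArtinAlg K ⥤ Type u) : Prop :=
  Nonempty (F.obj (ArtinAlg.self K)) ∧ Subsingleton (F.obj (ArtinAlg.self K))

/-- Smoothness of a functor of Artin rings: `F(B) → F(A)` is surjective for every surjection
`B → A` in `Art_K`. -/
def IsSmoothFunctor {K : Type u} [Field K] (F : ArtinAlg K ⥤ Type u) : Prop :=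
  ∀ (B A : ArtinAlg K) (f : B ⟶ A), Function.Surjective f → Function.Surjective (F.map f)

/-- Smoothness of a morphism of functors of Artin rings: for every surjection `B → A` in
`Art_K` the induced map `F(B) → G(B) ×_{G(A)} F(A)` is surjective. -/
def IsSmoothMorphism {K : Type u} [Field K] {F G : ArtinAlg K ⥤ Type u} (φ : F ⟶ G) : Prop :=
  ∀ (B A : ArtinAlg K) (f : B ⟶ A), Function.Surjective f →
    ∀ (gb : G.obj B) (fa : F.obj A), G.map f gb = φ.app A fa →
      ∃ fb : F.obj B, φ.app B fb = gb ∧ F.map f fb = fa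
/-- A small extension `e : 0 → J → B → A → 0` in `Art_K`: a surjection `π : B → A` whose
kernel `J` is annihilated by the maximal ideal `m_B`. -/
structure SmallExtension (K : Type u) [Field K] where
  B : ArtinAlg K
  A : ArtinAlg K
  π : B ⟶ A
  surj : Function.Surjective π
  small : ∀ x : B, π x = 0 → ∀ y ∈ IsLocalRing.maximalIdeal B.carrier, y * x = 0

/-- The kernel `J` of a small extension, as a `K`-vector space. -/
def SmallExtension.J {K : Type u} [Field K] (e : SmallExtension K) :
    Submodule K e.B.carrier :=
  Submodule.restrictScalars K (RingHom.ker (ArtinAlg.Hom.toAlgHom e.π).toRingHom)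

/-- The map induced on the kernels by a morphism of small extensions. -/
def SmallExtension.kerMap {K : Type u} [Field K] {e₁ e₂ : SmallExtension K}
    (αB : e₁.B ⟶ e₂.B) (αA : e₁.A ⟶ e₂.A) (hc : αB ≫ e₂.π = e₁.π ≫ αA) :
    e₁.J →ₗ[K] e₂.J where
  toFun x := ⟨αB x.1, by
    have hx : e₁.π x.1 = 0 := by
      have hx0 := x.2
      simp only [SmallExtension.J, Submodule.restrictScalars_mem, RingHom.mem_ker] at hx0
      exact hx0
    have h' : e₂.π (αB x.1) = αA (e₁.π x.1) := DFunLike.congr_fun hc x.1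
    simp only [SmallExtension.J, Submodule.restrictScalars_mem, RingHom.mem_ker]
    show e₂.π (αB x.1) = 0
    rw [h', hx, map_zero]⟩
  map_add' x y := by
    ext
    exact map_add (ArtinAlg.Hom.toAlgHom αB) x.1 y.1
  map_smul' c x := by
    ext
    exact map_smul (ArtinAlg.Hom.toAlgHom αB).toLinearMap c x.1

/-- An obstruction theory `(V, v_e)` for a functor of Artin rings `F`. -/
structure ObstructionTheory {K : Type u} [Field K] (F : ArtinAlg K ⥤ Type u) :
    Type (u + 1) where
  V : Type u
  [addCommGroup : AddCommGroup V]
  [module : Module K V]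
  ob : ∀ e : SmallExtension K, F.obj e.A → TensorProduct K V e.J
  ob_eq_zero_of_lifts : ∀ (e : SmallExtension K) (a : F.obj e.A),
    (∃ b : F.obj e.B, F.map e.π b = a) → ob e a = 0
  base_change : ∀ (e₁ e₂ : SmallExtension K) (αB : e₁.B ⟶ e₂.B) (αA : e₁.A ⟶ e₂.A)
    (hc : αB ≫ e₂.π = e₁.π ≫ αA) (a : F.obj e₁.A),
    ob e₂ (F.map αA a) = LinearMap.lTensor V (SmallExtension.kerMap αB αA hc) (ob e₁ a)

attribute [instance] ObstructionTheory.addCommGroup ObstructionTheory.module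

/-- Completeness of an obstruction theory: an element lifts iff its obstruction vanishes. -/
def ObstructionTheory.Complete {K : Type u} [Field K] {F : ArtinAlg K ⥤ Type u}
    (OT : ObstructionTheory F) : Prop :=
  ∀ (e : SmallExtension K) (a : F.obj e.A), OT.ob e a = 0 → ∃ b : F.obj e.B, F.map e.π b = a

/-!
An element of `F(A)` that lifts along a small extension has zero obstruction, which gives (a). For
(b), a complete obstruction theory with zero maps says that `F` is surjective on small extensions,
and every surjection `f : B → A` is a composite of small extensions: the maximal ideal `m` of `B` is
nilpotent, and `f` factors through the quotients of `B` by `m ^ n * ker f`, where each step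
`B ⧸ m ^ (n + 1) * ker f → B ⧸ m ^ n * ker f` is small.
-/

section

open IsLocalRing

theorem maximalIdeal_mul_ne_top {R : Type*} [CommRing R] [IsLocalRing R] (J : Ideal R) :
    maximalIdeal R * J ≠ ⊤ :=
  ne_top_of_le_ne_top (maximalIdeal.isMaximal R).ne_top Ideal.mul_le_left

theorem exists_maximalIdeal_pow_eq_bot (R : Type*) [CommRing R] [IsArtinianRing R]
    [IsLocalRing R] : ∃ n : ℕ, maximalIdeal R ^ n = ⊥ :=
  (isArtinianRing_iff_isNilpotent_maximalIdeal R).mp inferInstance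

theorem residueField_map_surjective {R S : Type*} [CommRing R] [IsLocalRing R] [CommRing S]
    [IsLocalRing S] {f : R →+* S} [IsLocalHom f] (hf : Function.Surjective f) :
    Function.Surjective (ResidueField.map f) :=
  .of_comp (g := residue R) (residue_surjective.comp hf)

variable {K : Type u} [Field K]

namespace ArtinAlg

/-- The quotient of an object of `Art_K` by a proper ideal, as an object of `Art_K`. -/
def quotient (B : ArtinAlg K) (I : Ideal B) (hI : I ≠ ⊤) : ArtinAlg K :=
  haveI : Nontrivial (B ⧸ I) := Ideal.Quotient.nontrivial_iff.mpr hI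
  haveI : IsLocalRing (B ⧸ I) := .of_surjective' (Ideal.Quotient.mk I) Ideal.Quotient.mk_surjective
  haveI : IsLocalHom (Ideal.Quotient.mk I) := .of_surjective _ Ideal.Quotient.mk_surjective
  { carrier := B ⧸ I
    residue_bij := by
      have factorization : (residue (B ⧸ I)).comp (algebraMap K (B ⧸ I)) =
          (ResidueField.map (Ideal.Quotient.mk I)).comp ((residue B).comp (algebraMap K B)) := rfl
      rw [factorization]
      exact ⟨RingHom.injective _,
        (residueField_map_surjective Ideal.Quotient.mk_surjective).comp B.residue_bij.surjective⟩ }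

section Quotient

variable {B A : ArtinAlg K} {I : Ideal B} (hI : I ≠ ⊤)

/-- The projection `B → B ⧸ I`, as a morphism of `Art_K`. -/
def quotientMk : B ⟶ B.quotient I hI :=
  Ideal.Quotient.mkₐ K I

theorem quotientMk_surjective : Function.Surjective (quotientMk hI) :=
  Ideal.Quotient.mk_surjective

theorem ker_quotientMk : RingHom.ker (quotientMk hI) = I :=
  Ideal.Quotient.mkₐ_ker K I

/-- The morphism `B ⧸ I → A` of `Art_K` induced by a morphism `B → A` whose kernel contains `I`. -/
def quotientLift (f : B ⟶ A) (hf : I ≤ RingHom.ker f) : B.quotient I hI ⟶ A :=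
  Ideal.Quotient.liftₐ I (Hom.toAlgHom f) hf

theorem quotientMk_comp_quotientLift (f : B ⟶ A) (hf : I ≤ RingHom.ker f) :
    quotientMk hI ≫ quotientLift hI f hf = f :=
  rfl

theorem ker_quotientLift (f : B ⟶ A) (hf : I ≤ RingHom.ker f) :
    RingHom.ker (quotientLift hI f hf) = (RingHom.ker f).map (quotientMk hI) :=
  Ideal.ker_quotient_lift (Hom.toAlgHom f).toRingHom hf

theorem quotientLift_surjective {f : B ⟶ A} (hf : I ≤ RingHom.ker f)
    (hfs : Function.Surjective f) : Function.Surjective (quotientLift hI f hf) :=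
  Ideal.Quotient.lift_surjective_of_surjective I (f := (Hom.toAlgHom f).toRingHom) hf hfs

end Quotient

theorem map_maximalIdeal {B C : ArtinAlg K} {p : B ⟶ C} (hp : Function.Surjective p) :
    (maximalIdeal B).map p = maximalIdeal C :=
  map_maximalIdeal_of_surjective (Hom.toAlgHom p).toRingHom hp

theorem maximalIdeal_mul_ker_quotientLift {B A : ArtinAlg K} (f : B ⟶ A) :
    maximalIdeal (B.quotient _ (maximalIdeal_mul_ne_top (RingHom.ker f))) *
      RingHom.ker (quotientLift (maximalIdeal_mul_ne_top _) f Ideal.mul_le_right) = ⊥ := by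
  rw [← map_maximalIdeal (quotientMk_surjective _), ker_quotientLift, ← Ideal.map_mul,
    Ideal.map_eq_bot_iff_le_ker, ker_quotientMk]

end ArtinAlg

namespace SmallExtension

open ArtinAlg

/-- The small extension given by a surjection of `Art_K` whose kernel `J` satisfies `m_B J = 0`. -/
def ofMulKerEqBot {B A : ArtinAlg K} (f : B ⟶ A) (hf : Function.Surjective f)
    (hker : maximalIdeal B * RingHom.ker f = ⊥) : SmallExtension K where
  B := B
  A := A
  π := f
  surj := hf
  small _ hx _ hy := (Submodule.eq_bot_iff _).mp hker _ (Ideal.mul_mem_mul hy hx)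

theorem morphismProperty_of_surjective (P : MorphismProperty (ArtinAlg K))
    [P.IsStableUnderComposition] (hP : ∀ e : SmallExtension K, P e.π) {B A : ArtinAlg K}
    (f : B ⟶ A) (hf : Function.Surjective f) : P f := by
  obtain ⟨n, hker⟩ : ∃ n : ℕ, maximalIdeal B ^ n * RingHom.ker f = ⊥ :=
    (exists_maximalIdeal_pow_eq_bot B).imp fun n hn ↦ by rw [hn, Ideal.bot_mul]
  induction n generalizing A with
  | zero =>
    rw [pow_zero, Ideal.one_eq_top, Ideal.top_mul] at hker
    exact hP (ofMulKerEqBot f hf (by rw [hker, Ideal.mul_bot]))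
  | succ n ih =>
    have hI := maximalIdeal_mul_ne_top (RingHom.ker f)
    rw [← quotientMk_comp_quotientLift hI f Ideal.mul_le_right]
    refine P.comp_mem _ _ (ih _ (quotientMk_surjective hI) ?_) ?_
    · rwa [ker_quotientMk, ← mul_assoc, ← pow_succ]
    · exact hP (ofMulKerEqBot _ (quotientLift_surjective hI Ideal.mul_le_right hf)
        (maximalIdeal_mul_ker_quotientLift f))

end SmallExtension

variable {F : ArtinAlg K ⥤ Type u}

theorem isSmoothFunctor_iff_smallExtension :
    IsSmoothFunctor F ↔ ∀ e : SmallExtension K, Function.Surjective (F.map e.π) where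
  mp hF e := hF e.B e.A e.π e.surj
  mpr h _ _ f hf := SmallExtension.morphismProperty_of_surjective
    ((MorphismProperty.surjective (Type u)).inverseImage F) h f hf

theorem IsSmoothFunctor.ob_eq_zero (hF : IsSmoothFunctor F) (OT : ObstructionTheory F)
    (e : SmallExtension K) (a : F.obj e.A) : OT.ob e a = 0 :=
  OT.ob_eq_zero_of_lifts e a (isSmoothFunctor_iff_smallExtension.mp hF e a)

theorem ObstructionTheory.Complete.isSmoothFunctor {OT : ObstructionTheory F} (hOT : OT.Complete)
    (hzero : ∀ (e : SmallExtension K) (a : F.obj e.A), OT.ob e a = 0) : IsSmoothFunctor F :=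
  isSmoothFunctor_iff_smallExtension.mpr fun e a ↦ hOT e a (hzero e a)

end

theorem smooth_iff_obstruction_vanish_general {K : Type u} [Field K] (F : ArtinAlg K ⥤ Type u) :
    (IsSmoothFunctor F →
      ∀ (OT : ObstructionTheory F) (e : SmallExtension K) (a : F.obj e.A), OT.ob e a = 0) ∧
    ((∃ OT : ObstructionTheory F, OT.Complete ∧
        ∀ (e : SmallExtension K) (a : F.obj e.A), OT.ob e a = 0) →
      IsSmoothFunctor F) :=
  ⟨IsSmoothFunctor.ob_eq_zero, fun ⟨_, hOT, hzero⟩ ↦ hOT.isSmoothFunctor hzero⟩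

/-- Let `F` be a functor of Artin rings. (a) If `F` is smooth, then every
obstruction theory for `F` has all its obstruction maps identically zero. (b) Conversely, if
`F` admits a complete obstruction theory all of whose obstruction maps are identically zero,
then `F` is smooth. -/
theorem smooth_iff_obstruction_vanish {K : Type u} [Field K]
    (F : ArtinAlg K ⥤ Type u) (hF : IsFunctorOfArtinRings F) :
    (IsSmoothFunctor F →
      ∀ (OT : ObstructionTheory F) (e : SmallExtension K) (a : F.obj e.A), OT.ob e a = 0) ∧
    ((∃ OT : ObstructionTheory F, OT.Complete ∧
        ∀ (e : SmallExtension K) (a : F.obj e.A), OT.ob e a = 0) →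
      IsSmoothFunctor F) :=
  smooth_iff_obstruction_vanish_general F
end

section
/- Let F be a deformation functor over Art_K. Then the set t_F = F(K[ε]), equipped with the addition given by the composite F(K[ε]) × F(K[ε]) ≅ F(K[ε] ×_K K[ε]) → F(K[ε]) (the inverse of the bijection η followed by F applied to the K-algebra map sending both ε₁ and ε₂ to ε), the scalar multiplication by a ∈ K given by F applied to the K-algebra map ε ↦ aε, and zero element the image of F(K) under F(K → K[ε]), is a K-vector space. -/
open CategoryTheory

universe u

/-- `(D, p, q)` realizes the fiber product `B ×_A C` in `Art_K` (stated concretely on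
underlying algebras). -/
structure IsFiberProductCone {K : Type u} [Field K] {A B C D : ArtinAlg K}
    (f : B ⟶ A) (g : C ⟶ A) (p : D ⟶ B) (q : D ⟶ C) : Prop where
  comm : ∀ d : D, f (p d) = g (q d)
  inj : ∀ d₁ d₂ : D, p d₁ = p d₂ → q d₁ = q d₂ → d₁ = d₂
  surj : ∀ (b : B) (c : C), f b = g c → ∃ d : D, p d = b ∧ q d = c

/-- A deformation functor: a functor of Artin rings such that the natural map
`η : F(B ×_A C) → F(B) ×_{F(A)} F(C)` is surjective whenever `B → A` is surjective, and
bijective whenever `A = K`. -/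
structure IsDeformationFunctor {K : Type u} [Field K] (F : ArtinAlg K ⥤ Type u) : Prop where
  nonempty_pt : Nonempty (F.obj (ArtinAlg.self K))
  subsingleton_pt : Subsingleton (F.obj (ArtinAlg.self K))
  eta_surjective : ∀ {A B C D : ArtinAlg K} (f : B ⟶ A) (g : C ⟶ A) (p : D ⟶ B) (q : D ⟶ C),
    IsFiberProductCone f g p q → Function.Surjective f →
    ∀ (x : F.obj B) (y : F.obj C), F.map f x = F.map g y →
      ∃ d : F.obj D, F.map p d = x ∧ F.map q d = y
  eta_bijective : ∀ {B C D : ArtinAlg K} (f : B ⟶ ArtinAlg.self K)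
    (g : C ⟶ ArtinAlg.self K) (p : D ⟶ B) (q : D ⟶ C),
    IsFiberProductCone f g p q →
    ∀ (x : F.obj B) (y : F.obj C), F.map f x = F.map g y →
      ∃! d : F.obj D, F.map p d = x ∧ F.map q d = y
open TrivSqZeroExt in
/-- A trivial square-zero extension `K ⊕ M` of a field `K` by a finite-dimensional vector
space `M`, as an object of `Art_K`. -/
noncomputable def ArtinAlg.tszeObj (K : Type u) [Field K] (M : Type u) [AddCommGroup M]
    [Module K M] [Module Kᵐᵒᵖ M] [IsCentralScalar K M] [Module.Finite K M] :
    ArtinAlg K :=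
  letI instArt : IsArtinianRing (TrivSqZeroExt K M) := by
    have : Module.Finite K (TrivSqZeroExt K M) :=
      inferInstanceAs (Module.Finite K (K × M))
    exact IsArtinianRing.of_finite K (TrivSqZeroExt K M)
  letI instLoc : IsLocalRing (TrivSqZeroExt K M) := by
    refine IsLocalRing.of_isUnit_or_isUnit_one_sub_self fun a => ?_
    rcases eq_or_ne a.fst 0 with h | h
    · right
      rw [isUnit_iff_isUnit_fst]
      simp [h]
    · left
      rw [isUnit_iff_isUnit_fst]
      exact h.isUnit
  { carrier := TrivSqZeroExt K M
    residue_bij := by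
      constructor
      · exact RingHom.injective _
      · intro y
        obtain ⟨x, hx⟩ := Ideal.Quotient.mk_surjective
          (I := IsLocalRing.maximalIdeal (TrivSqZeroExt K M)) y
        refine ⟨x.fst, ?_⟩
        have hmem : (inr x.snd : TrivSqZeroExt K M) ∈
            IsLocalRing.maximalIdeal (TrivSqZeroExt K M) := by
          rw [IsLocalRing.mem_maximalIdeal, mem_nonunits_iff, isUnit_iff_isUnit_fst, fst_inr]
          exact not_isUnit_zero
        have h0 : (IsLocalRing.residue (TrivSqZeroExt K M)) (inr x.snd) = 0 :=
          Ideal.Quotient.eq_zero_iff_mem.2 hmem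
        have hxeq : (algebraMap K (TrivSqZeroExt K M)) x.fst = x - inr x.snd := by
          rw [TrivSqZeroExt.algebraMap_eq_inl]
          exact eq_sub_of_add_eq (inl_fst_add_inr_snd_eq x)
        show (IsLocalRing.residue (TrivSqZeroExt K M)) ((algebraMap K _) x.fst) = y
        rw [hxeq, map_sub, h0, sub_zero]
        exact hx }
/-- The ring of dual numbers `K[ε]` as an object of `Art_K`. -/
noncomputable def ArtinAlg.eps (K : Type u) [Field K] : ArtinAlg K :=
  ArtinAlg.tszeObj K K

/-- The ring `K[ε₁, ε₂]/(ε₁, ε₂)²`, i.e. the fiber product `K[ε] ×_K K[ε]`, as an object of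
`Art_K`. -/
noncomputable def ArtinAlg.epsSq (K : Type u) [Field K] : ArtinAlg K :=
  ArtinAlg.tszeObj K (K × K)

/-- The first projection `K[ε₁, ε₂]/(ε₁, ε₂)² → K[ε]`, `ε₁ ↦ ε, ε₂ ↦ 0`. -/
noncomputable def ArtinAlg.pr1 (K : Type u) [Field K] : ArtinAlg.epsSq K ⟶ ArtinAlg.eps K :=
  TrivSqZeroExt.map (LinearMap.fst K K K)

/-- The second projection `K[ε₁, ε₂]/(ε₁, ε₂)² → K[ε]`, `ε₁ ↦ 0, ε₂ ↦ ε`. -/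
noncomputable def ArtinAlg.pr2 (K : Type u) [Field K] : ArtinAlg.epsSq K ⟶ ArtinAlg.eps K :=
  TrivSqZeroExt.map (LinearMap.snd K K K)

/-- The addition map `K[ε₁, ε₂]/(ε₁, ε₂)² → K[ε]` sending both `ε₁` and `ε₂` to `ε`. -/
noncomputable def ArtinAlg.addMap (K : Type u) [Field K] :
    ArtinAlg.epsSq K ⟶ ArtinAlg.eps K :=
  TrivSqZeroExt.map (LinearMap.fst K K K + LinearMap.snd K K K)

/-- The scaling map `K[ε] → K[ε]`, `ε ↦ a • ε`. -/
noncomputable def ArtinAlg.scaleMap (K : Type u) [Field K] (a : K) :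
    ArtinAlg.eps K ⟶ ArtinAlg.eps K :=
  TrivSqZeroExt.map (a • LinearMap.id)

/-- The unit map `K → K[ε]`. -/
noncomputable def ArtinAlg.unitMap (K : Type u) [Field K] :
    ArtinAlg.self K ⟶ ArtinAlg.eps K :=
  Algebra.ofId K (DualNumber K)

/-- The projection `K[ε] → K`, `ε ↦ 0`. -/
noncomputable def ArtinAlg.projMap (K : Type u) [Field K] :
    ArtinAlg.eps K ⟶ ArtinAlg.self K :=
  TrivSqZeroExt.fstHom K K K

/-!
A linear functional `f : M → K` induces `K ⊕ M → K[ε]`, so an element `d` of `F(K ⊕ M)` turns each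
functional on `M` into a tangent vector `F(f)(d)`. The operations on `t_F` are made so that
`f ↦ F(f)(d)` is `K`-linear, and by (H₂) any three tangent vectors come from functionals through one
common `d`. Each vector space axiom is therefore inherited from the dual space of `M`.
-/

namespace ArtinAlg

variable {K : Type u} [Field K]

section SquareZero

variable {M N P : Type u}
  [AddCommGroup M] [Module K M] [Module Kᵐᵒᵖ M] [IsCentralScalar K M] [Module.Finite K M]
  [AddCommGroup N] [Module K N] [Module Kᵐᵒᵖ N] [IsCentralScalar K N] [Module.Finite K N]
  [AddCommGroup P] [Module K P] [Module Kᵐᵒᵖ P] [IsCentralScalar K P] [Module.Finite K P]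

/-- The morphism `K ⊕ M ⟶ K ⊕ N` of square-zero extensions induced by a linear map `M → N`. -/
noncomputable def tszeMap (f : M →ₗ[K] N) : tszeObj K M ⟶ tszeObj K N :=
  TrivSqZeroExt.map f

variable (K M) in
/-- The augmentation `K ⊕ M ⟶ K` of a square-zero extension. -/
noncomputable def tszeProj : tszeObj K M ⟶ ArtinAlg.self K :=
  TrivSqZeroExt.fstHom K K M

theorem tszeMap_id : tszeMap (LinearMap.id : M →ₗ[K] M) = 𝟙 (tszeObj K M) :=
  TrivSqZeroExt.map_id

theorem tszeMap_comp (f : M →ₗ[K] N) (g : N →ₗ[K] P) :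
    tszeMap (g ∘ₗ f) = tszeMap f ≫ tszeMap g :=
  TrivSqZeroExt.map_comp_map f g

theorem tszeMap_zero : tszeMap (0 : M →ₗ[K] K) = tszeProj K M ≫ unitMap K :=
  TrivSqZeroExt.algHom_ext (R' := K) (A := TrivSqZeroExt K K) fun m =>
    calc TrivSqZeroExt.map (0 : M →ₗ[K] K) (TrivSqZeroExt.inr m)
      _ = 0 := by rw [TrivSqZeroExt.map_inr, LinearMap.zero_apply, TrivSqZeroExt.inr_zero]
      _ = algebraMap K (TrivSqZeroExt K K) (TrivSqZeroExt.inr m : TrivSqZeroExt K M).fst := by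
        rw [TrivSqZeroExt.fst_inr, map_zero]

theorem tszeMap_comp_scaleMap (a : K) (f : M →ₗ[K] K) :
    tszeMap f ≫ scaleMap K a = tszeMap (a • f) :=
  (tszeMap_comp f (a • LinearMap.id)).symm

theorem tszeMap_prod_comp_addMap (f g : M →ₗ[K] K) :
    tszeMap (f.prod g) ≫ addMap K = tszeMap (f + g) :=
  (tszeMap_comp (f.prod g) (LinearMap.fst K K K + LinearMap.snd K K K)).symm

theorem isFiberProductCone_tszeMap_fst_snd :
    IsFiberProductCone (tszeProj K M) (tszeProj K N)
      (tszeMap (LinearMap.fst K M N)) (tszeMap (LinearMap.snd K M N)) where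
  comm (d : TrivSqZeroExt K (M × N)) :=
    (TrivSqZeroExt.fst_map (LinearMap.fst K M N) d).trans
      (TrivSqZeroExt.fst_map (LinearMap.snd K M N) d).symm
  inj (d₁ d₂ : TrivSqZeroExt K (M × N))
      (h₁ : TrivSqZeroExt.map (LinearMap.fst K M N) d₁ = TrivSqZeroExt.map (.fst K M N) d₂)
      (h₂ : TrivSqZeroExt.map (LinearMap.snd K M N) d₁ = TrivSqZeroExt.map (.snd K M N) d₂) := by
    simp only [TrivSqZeroExt.ext_iff, TrivSqZeroExt.fst_map, TrivSqZeroExt.snd_map,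
      LinearMap.fst_apply, LinearMap.snd_apply] at h₁ h₂
    exact TrivSqZeroExt.ext h₁.1 (Prod.ext h₁.2 h₂.2)
  surj (b : TrivSqZeroExt K M) (c : TrivSqZeroExt K N) (h : b.fst = c.fst) :=
    ⟨((b.fst, (b.snd, c.snd)) : TrivSqZeroExt K (M × N)),
      TrivSqZeroExt.ext (TrivSqZeroExt.fst_map ..) (TrivSqZeroExt.snd_map ..),
      TrivSqZeroExt.ext ((TrivSqZeroExt.fst_map ..).trans h) (TrivSqZeroExt.snd_map ..)⟩

end SquareZero

/-- Schlessinger's condition (H₂) on a functor of Artin rings: the natural map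
`F(B ×_K K[ε]) → F(B) × F(K[ε])` is bijective. Its target is the full product because `F(K)` is a
point. -/
class SchlessingerH2 (F : ArtinAlg K ⥤ Type u) : Prop where
  isFunctorOfArtinRings : IsFunctorOfArtinRings F
  bijective_of_isFiberProductCone {B D : ArtinAlg K} {f : B ⟶ ArtinAlg.self K} {p : D ⟶ B}
    {q : D ⟶ eps K} (h : IsFiberProductCone f (projMap K) p q) :
    Function.Bijective fun d : F.obj D => (F.map p d, F.map q d)

/-- The tangent space `t_F = F(K[ε])`, as a type synonym that carries the vector space structure. -/
def TangentSpace (F : ArtinAlg K ⥤ Type u) : Type u :=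
  F.obj (eps K)

namespace TangentSpace

variable {F : ArtinAlg K ⥤ Type u} {M N : Type u}
  [AddCommGroup M] [Module K M] [Module Kᵐᵒᵖ M] [IsCentralScalar K M] [Module.Finite K M]
  [AddCommGroup N] [Module K N] [Module Kᵐᵒᵖ N] [IsCentralScalar K N] [Module.Finite K N]

/-- The tangent vector `F(f)(d)` obtained from `d ∈ F(K ⊕ M)` by pushing it forward along the map
`K ⊕ M → K[ε]` induced by a linear functional `f` on `M`. -/
noncomputable def along (d : F.obj (tszeObj K M)) (f : M →ₗ[K] K) : TangentSpace F :=
  F.map (tszeMap f) d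

theorem exists_along_id_eq (x : TangentSpace F) :
    ∃ d : F.obj (tszeObj K K), along d LinearMap.id = x :=
  ⟨x, (congrArg (F.map · x) tszeMap_id).trans (F.map_id_apply (tszeObj K K) x)⟩

theorem along_map (φ : M →ₗ[K] N) (d : F.obj (tszeObj K M)) (f : N →ₗ[K] K) :
    along (F.map (tszeMap φ) d) f = along d (f ∘ₗ φ) :=
  (F.map_comp_apply (tszeMap φ) (tszeMap f) d).symm.trans
    (congrArg (F.map · d) (tszeMap_comp φ f).symm)

noncomputable instance : SMul K (TangentSpace F) where
  smul a := F.map (scaleMap K a)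

theorem smul_along (a : K) (d : F.obj (tszeObj K M)) (f : M →ₗ[K] K) :
    a • along d f = along d (a • f) :=
  (F.map_comp_apply (tszeMap f) (scaleMap K a) d).symm.trans
    (congrArg (F.map · d) (tszeMap_comp_scaleMap a f))

noncomputable instance : Neg (TangentSpace F) where
  neg x := (-1 : K) • x

theorem neg_along (d : F.obj (tszeObj K M)) (f : M →ₗ[K] K) : -along d f = along d (-f) :=
  (smul_along (-1) d f).trans (congrArg (along d) (neg_one_smul K f))

variable [SchlessingerH2 F]

noncomputable instance : Zero (TangentSpace F) where
  zero := F.map (unitMap K) (SchlessingerH2.isFunctorOfArtinRings (F := F)).1.some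

theorem map_unitMap (z : F.obj (ArtinAlg.self K)) :
    F.map (unitMap K) z = (0 : TangentSpace F) :=
  congrArg (F.map (unitMap K)) (SchlessingerH2.isFunctorOfArtinRings.2.elim _ _)

theorem along_zero (d : F.obj (tszeObj K M)) : along d 0 = 0 :=
  (congrArg (F.map · d) tszeMap_zero).trans <|
    (F.map_comp_apply (tszeProj K M) (unitMap K) d).trans (map_unitMap _)

variable (F M) in
/-- The bijection `η : F(K ⊕ (M × K)) ≃ F(K ⊕ M) × t_F` given by (H₂); for `M = K` its inverse
enters the definition of the addition. -/
noncomputable def eta :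
    F.obj (tszeObj K (M × K)) ≃ F.obj (tszeObj K M) × TangentSpace F :=
  Equiv.ofBijective
    (fun d => (F.map (tszeMap (LinearMap.fst K M K)) d, along d (LinearMap.snd K M K)))
    (SchlessingerH2.bijective_of_isFiberProductCone isFiberProductCone_tszeMap_fst_snd)

theorem map_fst_eta_symm (d : F.obj (tszeObj K M)) (x : TangentSpace F) :
    F.map (tszeMap (LinearMap.fst K M K)) ((eta F M).symm (d, x)) = d :=
  congrArg Prod.fst ((eta F M).apply_symm_apply (d, x))

theorem along_snd_eta_symm (d : F.obj (tszeObj K M)) (x : TangentSpace F) :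
    along ((eta F M).symm (d, x)) (LinearMap.snd K M K) = x :=
  congrArg Prod.snd ((eta F M).apply_symm_apply (d, x))

theorem eta_symm_along (d : F.obj (tszeObj K M)) (f g : M →ₗ[K] K) :
    (eta F K).symm (along d f, along d g) = F.map (tszeMap (f.prod g)) d :=
  (eta F K).symm_apply_eq.2 <| Prod.ext
    (along_map (f.prod g) d (LinearMap.fst K K K)).symm
    (along_map (f.prod g) d (LinearMap.snd K K K)).symm

noncomputable instance : Add (TangentSpace F) where
  add x y := F.map (addMap K) ((eta F K).symm (x, y))

theorem along_add_along (d : F.obj (tszeObj K M)) (f g : M →ₗ[K] K) :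
    along d f + along d g = along d (f + g) :=
  (congrArg (F.map (addMap K)) (eta_symm_along d f g)).trans <|
    (F.map_comp_apply (tszeMap (f.prod g)) (addMap K) d).symm.trans
      (congrArg (F.map · d) (tszeMap_prod_comp_addMap f g))

theorem exists_along_eq₂ (x y : TangentSpace F) :
    ∃ (d : F.obj (tszeObj K (K × K))) (f g : K × K →ₗ[K] K), along d f = x ∧ along d g = y :=
  ⟨(eta F K).symm (x, y), _, _, map_fst_eta_symm (M := K) x y, along_snd_eta_symm x y⟩

theorem exists_along_eq₃ (x y z : TangentSpace F) :
    ∃ (d : F.obj (tszeObj K ((K × K) × K))) (f g h : (K × K) × K →ₗ[K] K),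
      along d f = x ∧ along d g = y ∧ along d h = z := by
  obtain ⟨d, f, g, rfl, rfl⟩ := exists_along_eq₂ x y
  refine ⟨(eta F (K × K)).symm (d, z), f ∘ₗ .fst K _ _, g ∘ₗ .fst K _ _, .snd K _ _,
    ?_, ?_, along_snd_eta_symm d z⟩ <;>
  rw [← along_map, map_fst_eta_symm]

noncomputable instance : AddCommGroup (TangentSpace F) where
  add_assoc x y z := by
    obtain ⟨d, f, g, h, rfl, rfl, rfl⟩ := exists_along_eq₃ x y z
    simp only [along_add_along, add_assoc]
  add_comm x y := by
    obtain ⟨d, f, g, rfl, rfl⟩ := exists_along_eq₂ x y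
    rw [along_add_along, along_add_along, add_comm]
  zero_add x := by
    obtain ⟨d, rfl⟩ := exists_along_id_eq x
    rw [← along_zero d, along_add_along, zero_add]
  add_zero x := by
    obtain ⟨d, rfl⟩ := exists_along_id_eq x
    rw [← along_zero d, along_add_along, add_zero]
  neg_add_cancel x := by
    obtain ⟨d, rfl⟩ := exists_along_id_eq x
    rw [neg_along, along_add_along, neg_add_cancel, along_zero]
  nsmul := nsmulRec
  zsmul := zsmulRec

noncomputable instance : Module K (TangentSpace F) :=
  Module.ofMinimalAxioms
    (fun a x y => by
      obtain ⟨d, f, g, rfl, rfl⟩ := exists_along_eq₂ x y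
      simp only [along_add_along, smul_along, smul_add])
    (fun a b x => by
      obtain ⟨d, rfl⟩ := exists_along_id_eq x
      simp only [along_add_along, smul_along, add_smul])
    (fun a b x => by
      obtain ⟨d, rfl⟩ := exists_along_id_eq x
      simp only [smul_along, mul_smul])
    (fun x => by
      obtain ⟨d, rfl⟩ := exists_along_id_eq x
      rw [smul_along, one_smul])

end TangentSpace

end ArtinAlg

theorem IsDeformationFunctor.schlessingerH2 {K : Type u} [Field K]
    {F : ArtinAlg K ⥤ Type u} (hF : IsDeformationFunctor F) : ArtinAlg.SchlessingerH2 F where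
  isFunctorOfArtinRings := ⟨hF.nonempty_pt, hF.subsingleton_pt⟩
  bijective_of_isFiberProductCone h := by
    refine (Function.bijective_iff_existsUnique _).2 fun ⟨x, y⟩ => ?_
    simpa only [Prod.mk.injEq] using
      hF.eta_bijective _ _ _ _ h x y (hF.subsingleton_pt.elim _ _)

open ArtinAlg TangentSpace in
theorem tangentSpace_isVectorSpace_general {K : Type u} [Field K] (F : ArtinAlg K ⥤ Type u)
    [SchlessingerH2 F] :
    ∃ (add : F.obj (ArtinAlg.eps K) → F.obj (ArtinAlg.eps K) → F.obj (ArtinAlg.eps K))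
      (smul : K → F.obj (ArtinAlg.eps K) → F.obj (ArtinAlg.eps K))
      (zero : F.obj (ArtinAlg.eps K)),
      (∀ x y : F.obj (ArtinAlg.eps K), ∃ d : F.obj (ArtinAlg.epsSq K),
        F.map (ArtinAlg.pr1 K) d = x ∧ F.map (ArtinAlg.pr2 K) d = y ∧
          add x y = F.map (ArtinAlg.addMap K) d) ∧
      (∀ (a : K) (x : F.obj (ArtinAlg.eps K)), smul a x = F.map (ArtinAlg.scaleMap K a) x) ∧
      (∀ z : F.obj (ArtinAlg.self K), zero = F.map (ArtinAlg.unitMap K) z) ∧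
      (∀ x y z, add (add x y) z = add x (add y z)) ∧
      (∀ x y, add x y = add y x) ∧
      (∀ x, add zero x = x) ∧
      (∀ x, ∃ y, add x y = zero) ∧
      (∀ x, smul (1 : K) x = x) ∧
      (∀ (a b : K) x, smul (a * b) x = smul a (smul b x)) ∧
      (∀ (a : K) x y, smul a (add x y) = add (smul a x) (smul a y)) ∧
      (∀ (a b : K) x, add (smul a x) (smul b x) = smul (a + b) x) :=
  ⟨fun x y : TangentSpace F => x + y, fun (a : K) (x : TangentSpace F) => a • x,
    (0 : TangentSpace F),
    fun x y => ⟨(eta F K).symm (x, y), map_fst_eta_symm (M := K) x y,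
      along_snd_eta_symm (M := K) x y, rfl⟩,
    fun _ _ => rfl,
    fun z => (map_unitMap z).symm,
    add_assoc (G := TangentSpace F),
    add_comm (G := TangentSpace F),
    zero_add (M := TangentSpace F),
    fun x : TangentSpace F => ⟨-x, add_neg_cancel x⟩,
    one_smul K (α := TangentSpace F),
    mul_smul (β := TangentSpace F),
    smul_add (A := TangentSpace F),
    fun a b (x : TangentSpace F) => (add_smul a b x).symm⟩

/-- For a deformation functor `F`, the set `t_F = F(K[ε])`, equipped with
the addition obtained from the inverse of the bijection
`η : F(K[ε] ×_K K[ε]) → F(K[ε]) × F(K[ε])` followed by `F` of the map sending both `ε₁` and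
`ε₂` to `ε`, the scalar multiplication by `a ∈ K` given by `F(ε ↦ aε)`, and zero element the
image of the point `F(K)` under `F(K → K[ε])`, is a `K`-vector space. -/
theorem tangentSpace_isVectorSpace {K : Type u} [Field K] (F : ArtinAlg K ⥤ Type u)
    (hF : IsDeformationFunctor F) :
    ∃ (add : F.obj (ArtinAlg.eps K) → F.obj (ArtinAlg.eps K) → F.obj (ArtinAlg.eps K))
      (smul : K → F.obj (ArtinAlg.eps K) → F.obj (ArtinAlg.eps K))
      (zero : F.obj (ArtinAlg.eps K)),
      -- `add` is the prescribed addition: `add x y = F(σ)(η⁻¹(x, y))`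
      (∀ x y : F.obj (ArtinAlg.eps K), ∃ d : F.obj (ArtinAlg.epsSq K),
        F.map (ArtinAlg.pr1 K) d = x ∧ F.map (ArtinAlg.pr2 K) d = y ∧
          add x y = F.map (ArtinAlg.addMap K) d) ∧
      -- `smul` is the prescribed scalar multiplication
      (∀ (a : K) (x : F.obj (ArtinAlg.eps K)), smul a x = F.map (ArtinAlg.scaleMap K a) x) ∧
      -- `zero` is the image of the one-point set `F(K)`
      (∀ z : F.obj (ArtinAlg.self K), zero = F.map (ArtinAlg.unitMap K) z) ∧
      -- the `K`-vector space axioms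
      (∀ x y z, add (add x y) z = add x (add y z)) ∧
      (∀ x y, add x y = add y x) ∧
      (∀ x, add zero x = x) ∧
      (∀ x, ∃ y, add x y = zero) ∧
      (∀ x, smul (1 : K) x = x) ∧
      (∀ (a b : K) x, smul (a * b) x = smul a (smul b x)) ∧
      (∀ (a : K) x y, smul a (add x y) = add (smul a x) (smul a y)) ∧
      (∀ (a b : K) x, add (smul a x) (smul b x) = smul (a + b) x) := by
  have := hF.schlessingerH2
  exact tangentSpace_isVectorSpace_general F
end

section
/- Let φ : F → G be a morphism of deformation functors over Art_K. Then there exists a universal relative obstruction theory for φ, and it is unique up to isomorphism of relative obstruction theories. -/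
open CategoryTheory

universe u

lemma SmallExtension.rel_compat {K : Type u} [Field K] {F G : ArtinAlg K ⥤ Type u}
    (φ : F ⟶ G) {e₁ e₂ : SmallExtension K} (αB : e₁.B ⟶ e₂.B) (αA : e₁.A ⟶ e₂.A)
    (hc : αB ≫ e₂.π = e₁.π ≫ αA) (a : F.obj e₁.A) (β : G.obj e₁.B)
    (h : G.map e₁.π β = φ.app e₁.A a) :
    G.map e₂.π (G.map αB β) = φ.app e₂.A (F.map αA a) := by
  have h1 : G.map e₂.π (G.map αB β) = G.map αA (G.map e₁.π β) := by
    rw [← FunctorToTypes.map_comp_apply, ← FunctorToTypes.map_comp_apply, hc]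
  rw [h1, h]
  exact (NatTrans.naturality_apply φ αA a).symm

/-- A relative obstruction theory `(V, v_e)` for a morphism `φ : F → G` of functors of Artin
rings: for every small extension `e : 0 → J → B → A → 0`, a map
`v_e : F(A) ×_{G(A)} G(B) → V ⊗_K J` vanishing on pairs that lift to `F(B)` and compatible
with base change along morphisms of small extensions. -/
structure RelObstructionTheory {K : Type u} [Field K] {F G : ArtinAlg K ⥤ Type u}
    (φ : F ⟶ G) : Type (u + 1) where
  V : Type u
  [addCommGroup : AddCommGroup V]
  [module : Module K V]
  ob : ∀ (e : SmallExtension K) (a : F.obj e.A) (β : G.obj e.B),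
    G.map e.π β = φ.app e.A a → TensorProduct K V e.J
  ob_eq_zero_of_lifts : ∀ (e : SmallExtension K) (a : F.obj e.A) (β : G.obj e.B)
    (h : G.map e.π β = φ.app e.A a),
    (∃ b : F.obj e.B, F.map e.π b = a ∧ φ.app e.B b = β) → ob e a β h = 0
  base_change : ∀ (e₁ e₂ : SmallExtension K) (αB : e₁.B ⟶ e₂.B) (αA : e₁.A ⟶ e₂.A)
    (hc : αB ≫ e₂.π = e₁.π ≫ αA) (a : F.obj e₁.A) (β : G.obj e₁.B)
    (h : G.map e₁.π β = φ.app e₁.A a),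
    ob e₂ (F.map αA a) (G.map αB β) (SmallExtension.rel_compat φ αB αA hc a β h) =
      LinearMap.lTensor V (SmallExtension.kerMap αB αA hc) (ob e₁ a β h)

attribute [instance] RelObstructionTheory.addCommGroup RelObstructionTheory.module

/-- Completeness of a relative obstruction theory. -/
def RelObstructionTheory.Complete {K : Type u} [Field K] {F G : ArtinAlg K ⥤ Type u}
    {φ : F ⟶ G} (ROT : RelObstructionTheory φ) : Prop :=
  ∀ (e : SmallExtension K) (a : F.obj e.A) (β : G.obj e.B)
    (h : G.map e.π β = φ.app e.A a), ROT.ob e a β h = 0 →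
    ∃ b : F.obj e.B, F.map e.π b = a ∧ φ.app e.B b = β

/-- A morphism of relative obstruction theories `(V, v_e) → (W, w_e)` for `φ`: a linear map
`ψ : V → W` with `w_e = (ψ ⊗ id_J) ∘ v_e` for every small extension `e`. -/
def RelObstructionTheory.IsMorphism {K : Type u} [Field K] {F G : ArtinAlg K ⥤ Type u}
    {φ : F ⟶ G} (ROT ROT' : RelObstructionTheory φ) (ψ : ROT.V →ₗ[K] ROT'.V) : Prop :=
  ∀ (e : SmallExtension K) (a : F.obj e.A) (β : G.obj e.B)
    (h : G.map e.π β = φ.app e.A a),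
    ROT'.ob e a β h = LinearMap.rTensor (↥e.J) ψ (ROT.ob e a β h)

/-- A relative obstruction theory is universal if it admits a unique morphism to every
relative obstruction theory for `φ`. -/
def RelObstructionTheory.IsUniversal {K : Type u} [Field K] {F G : ArtinAlg K ⥤ Type u}
    {φ : F ⟶ G} (ROT : RelObstructionTheory φ) : Prop :=
  ∀ ROT' : RelObstructionTheory φ,
    ∃! ψ : ROT.V →ₗ[K] ROT'.V, RelObstructionTheory.IsMorphism ROT ROT' ψ

/-!
As `J` is finite-dimensional, an element of `V ⊗ J` is the same thing as a linear map
`J^∨ → V`. A relative obstruction theory with space `V` is therefore a family of linear maps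
`J^∨ → V`, one for each lifting problem, which vanishes on the liftable problems and is natural
for morphisms of small extensions. The quotient of `⨁ J^∨` by the relations that these two
conditions impose carries the universal such family. The sum runs over a proper class, but the
objects of `Art_K` are finitely generated, so up to isomorphism only a set of lifting problems
occurs. By naturality isomorphic problems have the same image in the quotient, which is therefore
isomorphic to a vector space in the universe of `K`.
-/

open TensorProduct

section TensorDual

variable {R M N V W : Type*} [CommRing R] [AddCommGroup M] [Module R M] [Module.Finite R M]
  [Module.Projective R M] [AddCommGroup N] [Module R N] [Module.Finite R N]
  [Module.Projective R N] [AddCommGroup V] [Module R V] [AddCommGroup W] [Module R W]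

variable (R V M) in
/-- The isomorphism `V ⊗ M ≃ Hom(M^∨, V)` for a finite projective module `M`, given by contraction
with the linear forms on `M`. -/
noncomputable def tensorEquivDualHom : V ⊗[R] M ≃ₗ[R] (Module.Dual R M →ₗ[R] V) :=
  TensorProduct.comm R V M ≪≫ₗ
    TensorProduct.congr (Module.evalEquiv R M) (LinearEquiv.refl R V) ≪≫ₗ
      dualTensorHomEquiv R (Module.Dual R M) V

@[simp]
lemma tensorEquivDualHom_tmul (v : V) (m : M) (l : Module.Dual R M) :
    tensorEquivDualHom R M V (v ⊗ₜ m) l = l m • v := by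
  simp [tensorEquivDualHom]

lemma tensorEquivDualHom_lTensor (f : M →ₗ[R] N) (t : V ⊗[R] M) :
    tensorEquivDualHom R N V (f.lTensor V t) = tensorEquivDualHom R M V t ∘ₗ f.dualMap := by
  induction t with
  | zero => simp
  | tmul v m => ext l; simp
  | add s t hs ht => simp [hs, ht, LinearMap.add_comp]

lemma tensorEquivDualHom_rTensor (g : V →ₗ[R] W) (t : V ⊗[R] M) :
    tensorEquivDualHom R M W (g.rTensor M t) = g ∘ₗ tensorEquivDualHom R M V t := by
  induction t with
  | zero => simp
  | tmul v m => ext l; simp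
  | add s t hs ht => simp [hs, ht, LinearMap.comp_add]

end TensorDual

section UniversalObstruction

variable {K : Type u} [Field K]

namespace ArtinAlg

instance (A : ArtinAlg K) : Module.Finite K A.carrier := by
  have : Module.Finite K (A.carrier ⧸ Ring.jacobson A.carrier) := by
    rw [IsLocalRing.ringJacobson_eq_maximalIdeal]
    exact .of_surjective (Algebra.linearMap K (IsLocalRing.ResidueField A.carrier))
      A.residue_bij.surjective
  exact IsSemiprimaryRing.finite_of_isArtinian K A.carrier A.carrier

variable (K) in
/-- The inclusion of `Art_K` into the category of finitely generated `K`-algebras, through which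
`Art_K` is seen to be essentially small. -/
def toFGAlgCat : ArtinAlg K ⥤ FGAlgCat.{u} K where
  obj A := ⟨CommAlgCat.of K A.carrier, inferInstanceAs (Algebra.FiniteType K A.carrier)⟩
  map f := ObjectProperty.homMk (CommAlgCat.ofHom (Hom.toAlgHom f))

variable (K) in
/-- `Art_K` is a full subcategory of the category of finitely generated `K`-algebras. -/
def fullyFaithfulToFGAlgCat : (toFGAlgCat K).FullyFaithful where
  preimage f := f.hom.hom

instance : EssentiallySmall.{u} (ArtinAlg K) :=
  have := (fullyFaithfulToFGAlgCat K).full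
  have := (fullyFaithfulToFGAlgCat K).faithful
  essentiallySmall_of_fully_faithful (toFGAlgCat K)

/-- The algebra isomorphism underlying an isomorphism of `Art_K`. -/
def algEquivOfIso {A B : ArtinAlg K} (i : A ≅ B) : A.carrier ≃ₐ[K] B.carrier :=
  AlgEquiv.ofAlgHom i.hom i.inv i.inv_hom_id i.hom_inv_id

end ArtinAlg

namespace SmallExtension

instance (e : SmallExtension K) : Module.Finite K e.J :=
  FiniteDimensional.finiteDimensional_submodule e.J

/-- The transport of a small extension along isomorphisms of its two algebras. -/
def ofIso (e : SmallExtension K) {B A : ArtinAlg K} (iB : e.B ≅ B) (iA : e.A ≅ A) :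
    SmallExtension K where
  B := B
  A := A
  π := iB.inv ≫ e.π ≫ iA.hom
  surj := (ArtinAlg.algEquivOfIso iA).surjective.comp
    (e.surj.comp (ArtinAlg.algEquivOfIso iB).symm.surjective)
  small x hx y hy := by
    let f := (ArtinAlg.algEquivOfIso iB).symm
    have hfx : e.π (f x) = 0 :=
      (ArtinAlg.algEquivOfIso iA).injective (hx.trans (map_zero _).symm)
    have hfy : f y ∈ IsLocalRing.maximalIdeal e.B.carrier := (map_mem_nonunits_iff f y).2 hy
    refine f.injective ?_
    rw [map_mul, map_zero, e.small _ hfx _ hfy]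

end SmallExtension

variable {F G : ArtinAlg K ⥤ Type u} {φ : F ⟶ G}

variable (φ) in
/-- A lifting problem for `φ`: a small extension `0 → J → B → A → 0` together with an element
`(a, β)` of `F(A) ×_{G(A)} G(B)`. -/
structure LiftingProblem extends SmallExtension K where
  a : F.obj A
  β : G.obj B
  compat : G.map π β = φ.app A a

namespace LiftingProblem

/-- A lifting problem is liftable if `(a, β)` is the image of an element of `F(B)`. -/
def IsLiftable (d : LiftingProblem φ) : Prop :=
  ∃ b : F.obj d.B, F.map d.π b = d.a ∧ φ.app d.B b = d.β

/-- The image of a lifting problem under a morphism of small extensions. -/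
abbrev map (d : LiftingProblem φ) {e : SmallExtension K} {αB : d.B ⟶ e.B} {αA : d.A ⟶ e.A}
    (comm : αB ≫ e.π = d.π ≫ αA) : LiftingProblem φ :=
  ⟨e, F.map αA d.a, G.map αB d.β,
    SmallExtension.rel_compat (e₁ := d.toSmallExtension) φ αB αA comm d.a d.β d.compat⟩

instance small_setOf_algebras_eq (B A : ArtinAlg K) :
    Small.{u} {d : LiftingProblem φ | d.B = B ∧ d.A = A} := by
  let data : {d : LiftingProblem φ | d.B = B ∧ d.A = A} → (B ⟶ A) × F.obj A × G.obj B
    | ⟨⟨⟨_, _, π, _, _⟩, a, β, _⟩, rfl, rfl⟩ => (π, a, β)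
  refine small_of_injective (f := data) ?_
  rintro ⟨⟨⟨B, A, π, _, _⟩, a, β, _⟩, rfl, rfl⟩ ⟨⟨⟨B', A', π', _, _⟩, a', β', _⟩, hB, hA⟩ h
  cases hB
  cases hA
  cases h
  rfl

variable (φ) in
lemma exists_small_set_map_mem : ∃ S : Set (LiftingProblem φ), Small.{u} S ∧
    ∀ d : LiftingProblem φ, ∃ (e : SmallExtension K) (αB : d.B ⟶ e.B) (αA : d.A ⟶ e.A)
      (comm : αB ≫ e.π = d.π ≫ αA), d.map comm ∈ S ∧ Function.Injective αB := by
  obtain ⟨Q, hQ, -, hQ_iso⟩ :=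
    ObjectProperty.EssentiallySmall.exists_small_le.{u} (⊤ : ObjectProperty (ArtinAlg K))
  refine ⟨⋃ (B : Subtype Q) (A : Subtype Q), {d | d.B = B.1 ∧ d.A = A.1}, inferInstance,
    fun d => ?_⟩
  obtain ⟨B, hB, ⟨iB⟩⟩ := hQ_iso d.B trivial
  obtain ⟨A, hA, ⟨iA⟩⟩ := hQ_iso d.A trivial
  have comm : iB.hom ≫ (d.ofIso iB iA).π = d.π ≫ iA.hom := by simp [SmallExtension.ofIso]
  exact ⟨d.ofIso iB iA, iB.hom, iA.hom, comm, Set.mem_iUnion₂.2 ⟨⟨B, hB⟩, ⟨A, hA⟩, rfl, rfl⟩,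
    (ArtinAlg.algEquivOfIso iB).injective⟩

end LiftingProblem

/-- A family of linear maps `J^∨ → W`, one for each lifting problem, which vanishes on liftable
problems and is natural for morphisms of small extensions. Under `W ⊗ J ≃ Hom(J^∨, W)` these are
the relative obstruction theories for `φ` with space `W`, except that here `W` may live in any
universe. -/
structure IsContractionFamily {W : Type*} [AddCommGroup W] [Module K W]
    (c : ∀ d : LiftingProblem φ, Module.Dual K d.J →ₗ[K] W) : Prop where
  eq_zero (d : LiftingProblem φ) : d.IsLiftable → c d = 0
  map (d : LiftingProblem φ) {e : SmallExtension K} {αB : d.B ⟶ e.B} {αA : d.A ⟶ e.A}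
    (comm : αB ≫ e.π = d.π ≫ αA) :
    c (d.map comm) = c d ∘ₗ (SmallExtension.kerMap αB αA comm).dualMap

lemma IsContractionFamily.linearMap_comp {W W' : Type*} [AddCommGroup W] [Module K W]
    [AddCommGroup W'] [Module K W'] {c : ∀ d : LiftingProblem φ, Module.Dual K d.J →ₗ[K] W}
    (hc : IsContractionFamily c) (g : W →ₗ[K] W') : IsContractionFamily fun d => g ∘ₗ c d where
  eq_zero d hd := by rw [hc.eq_zero d hd, LinearMap.comp_zero]
  map d _ _ _ comm := by rw [hc.map d comm, LinearMap.comp_assoc]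

variable (φ) in
/-- The direct sum of the spaces `J^∨` over all lifting problems: the free target of families of
linear maps `J^∨ → W`. -/
abbrev FreeObstructionSpace : Type (u + 1) :=
  DirectSum (LiftingProblem φ) fun d => Module.Dual K d.J

-- Without this shortcut, unification gets stuck on the family of group structures when a quotient
-- of the direct sum is formed.
noncomputable instance : AddCommGroup (FreeObstructionSpace φ) := inferInstance

open scoped Classical in
/-- The inclusion of the summand `J^∨` of a lifting problem. -/
noncomputable abbrev FreeObstructionSpace.of (d : LiftingProblem φ) :
    Module.Dual K d.J →ₗ[K] FreeObstructionSpace φ :=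
  DirectSum.lof K (LiftingProblem φ) (fun d => Module.Dual K d.J) d

open FreeObstructionSpace in
variable (φ) in
/-- The relations between the contractions of obstructions that hold in every relative obstruction
theory for `φ`. -/
noncomputable def contractionRelations : Submodule K (FreeObstructionSpace φ) :=
  (⨆ (d : LiftingProblem φ) (_ : d.IsLiftable), (of d).range) ⊔
  ⨆ (d : LiftingProblem φ) (e : SmallExtension K) (αB : d.B ⟶ e.B) (αA : d.A ⟶ e.A)
      (comm : αB ≫ e.π = d.π ≫ αA),
    (of (d.map comm) - of d ∘ₗ (SmallExtension.kerMap αB αA comm).dualMap).range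

variable (φ) in
/-- The universal target of contraction families. It is formed from all lifting problems and hence
lives in a larger universe than the space of a relative obstruction theory. -/
abbrev ObstructionSpace : Type (u + 1) :=
  FreeObstructionSpace φ ⧸ contractionRelations φ

namespace ObstructionSpace

/-- The universal contraction family. -/
noncomputable def ι (d : LiftingProblem φ) : Module.Dual K d.J →ₗ[K] ObstructionSpace φ :=
  (contractionRelations φ).mkQ ∘ₗ FreeObstructionSpace.of d

lemma isContractionFamily_ι : IsContractionFamily (ι (φ := φ)) where
  eq_zero d hd := by
    rw [ι, ← LinearMap.range_le_ker_iff, Submodule.ker_mkQ]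
    exact le_sup_of_le_left (le_iSup₂_of_le d hd le_rfl)
  map d e αB αA comm := by
    rw [ι, ι, LinearMap.comp_assoc, ← sub_eq_zero, ← LinearMap.comp_sub,
      ← LinearMap.range_le_ker_iff, Submodule.ker_mkQ]
    exact le_sup_of_le_right
      (le_iSup₂_of_le d e (le_iSup₂_of_le αB αA (le_iSup_of_le comm le_rfl)))

lemma existsUnique_comp_ι {W : Type*} [AddCommGroup W] [Module K W]
    {c : ∀ d : LiftingProblem φ, Module.Dual K d.J →ₗ[K] W} (hc : IsContractionFamily c) :
    ∃! g : ObstructionSpace φ →ₗ[K] W, ∀ d, g ∘ₗ ι d = c d := by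
  classical
  have hker : contractionRelations φ ≤ (DirectSum.toModule K (LiftingProblem φ) W c).ker := by
    have toModule_of (d) : DirectSum.toModule K _ W c ∘ₗ FreeObstructionSpace.of d = c d := by
      ext l; simp
    simp only [contractionRelations, sup_le_iff, iSup_le_iff, LinearMap.range_le_ker_iff,
      LinearMap.comp_sub, ← LinearMap.comp_assoc, toModule_of, sub_eq_zero]
    exact ⟨hc.eq_zero, fun d _ _ _ comm => hc.map d comm⟩
  refine ⟨(contractionRelations φ).liftQ _ hker, fun d => ?_, fun g hg => ?_⟩
  · ext l
    simp [ι]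
  · refine Submodule.linearMap_qext _ (DirectSum.linearMap_ext K fun d => ?_)
    rw [Submodule.liftQ_mkQ, LinearMap.comp_assoc]
    ext l
    simpa [ι] using LinearMap.congr_fun (hg d) l

lemma iSup_range_ι : ⨆ d : LiftingProblem φ, (ι d).range = ⊤ := by
  classical
  have iSup_range_of : ⨆ d : LiftingProblem φ, (FreeObstructionSpace.of d).range = ⊤ :=
    DFinsupp.iSup_range_lsingle
  simp only [ι, LinearMap.range_comp, ← Submodule.map_iSup, iSup_range_of, Submodule.map_top,
    Submodule.range_mkQ]

instance : Small.{u} (ObstructionSpace φ) := by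
  obtain ⟨S, hS, hS_map⟩ := LiftingProblem.exists_small_set_map_mem φ
  have hspan : ⨆ d : S, (ι d.1).range = (⊤ : Submodule K (ObstructionSpace φ)) := by
    rw [eq_top_iff, ← iSup_range_ι]
    refine iSup_le fun d => ?_
    obtain ⟨e, αB, αA, comm, hdS, hαB⟩ := hS_map d
    have hdual : (SmallExtension.kerMap αB αA comm).dualMap.range = ⊤ :=
      LinearMap.range_eq_top.2 (LinearMap.dualMap_surjective_of_injective fun _ _ h =>
        Subtype.ext (hαB (congrArg Subtype.val h)))
    refine le_iSup_of_le ⟨d.map comm, hdS⟩ ?_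
    rw [isContractionFamily_ι.map d comm, LinearMap.range_comp_of_range_eq_top _ hdual]
  have : Small.{u} (⊤ : Submodule K (ObstructionSpace φ)) := by
    rw [← hspan]
    have (d : S) : Small.{u} (ι d.1).range := small_range (ι d.1)
    infer_instance
  exact small_univ_iff.1 this

end ObstructionSpace

namespace RelObstructionTheory

/-- The linear map `J^∨ → V` which contracts the obstruction in `V ⊗ J` with linear forms. -/
noncomputable def contraction (T : RelObstructionTheory φ) (d : LiftingProblem φ) :
    Module.Dual K d.J →ₗ[K] T.V :=
  tensorEquivDualHom K d.J T.V (T.ob d.toSmallExtension d.a d.β d.compat)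

lemma isContractionFamily_contraction (T : RelObstructionTheory φ) :
    IsContractionFamily T.contraction where
  eq_zero d hd := by
    rw [contraction, T.ob_eq_zero_of_lifts _ _ _ _ hd, map_zero]
  map d e αB αA comm := by
    rw [contraction, contraction, ← tensorEquivDualHom_lTensor]
    exact congrArg (tensorEquivDualHom K e.J T.V)
      (T.base_change d.toSmallExtension e αB αA comm d.a d.β d.compat)

lemma isMorphism_iff {T T' : RelObstructionTheory φ} {ψ : T.V →ₗ[K] T'.V} :
    T.IsMorphism T' ψ ↔ ∀ d, ψ ∘ₗ T.contraction d = T'.contraction d := by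
  simp only [contraction, ← tensorEquivDualHom_rTensor, EmbeddingLike.apply_eq_iff_eq]
  exact ⟨fun h d => (h _ _ _ _).symm, fun h e a β compat => (h ⟨e, a, β, compat⟩).symm⟩

/-- The relative obstruction theory with prescribed contractions. -/
noncomputable def ofContractions {V : Type u} [AddCommGroup V] [Module K V]
    {c : ∀ d : LiftingProblem φ, Module.Dual K d.J →ₗ[K] V} (hc : IsContractionFamily c) :
    RelObstructionTheory φ where
  V := V
  ob e a β h := (tensorEquivDualHom K e.J V).symm (c ⟨e, a, β, h⟩)
  ob_eq_zero_of_lifts e a β h hb := by rw [hc.eq_zero ⟨e, a, β, h⟩ hb, map_zero]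
  base_change e₁ e₂ αB αA comm a β h := by
    let d : LiftingProblem φ := ⟨e₁, a, β, h⟩
    refine (LinearEquiv.symm_apply_eq _).2 ((hc.map d comm).trans ?_)
    rw [tensorEquivDualHom_lTensor, LinearEquiv.apply_symm_apply]

lemma contraction_ofContractions {V : Type u} [AddCommGroup V] [Module K V]
    {c : ∀ d : LiftingProblem φ, Module.Dual K d.J →ₗ[K] V} (hc : IsContractionFamily c)
    (d : LiftingProblem φ) : (ofContractions hc).contraction d = c d :=
  (tensorEquivDualHom K d.J V).apply_symm_apply (c d)

lemma isUniversal_ofContractions {V : Type u} [AddCommGroup V] [Module K V]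
    {c : ∀ d : LiftingProblem φ, Module.Dual K d.J →ₗ[K] V} (hc : IsContractionFamily c)
    (hc_universal : ∀ {W : Type u} [AddCommGroup W] [Module K W]
      {c' : ∀ d : LiftingProblem φ, Module.Dual K d.J →ₗ[K] W}, IsContractionFamily c' →
        ∃! g : V →ₗ[K] W, ∀ d, g ∘ₗ c d = c' d) :
    (ofContractions hc).IsUniversal := fun T => by
  simp only [isMorphism_iff, contraction_ofContractions]
  exact hc_universal T.isContractionFamily_contraction

variable (φ) in
theorem exists_isUniversal : ∃ T : RelObstructionTheory φ, T.IsUniversal := by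
  let s := (Shrink.linearEquiv.{u} K (ObstructionSpace φ)).symm
  refine ⟨_, isUniversal_ofContractions
    (ObstructionSpace.isContractionFamily_ι.linearMap_comp s.toLinearMap) fun hc => ?_⟩
  obtain ⟨g, hg, hg_unique⟩ := ObstructionSpace.existsUnique_comp_ι hc
  refine ⟨g ∘ₗ s.symm.toLinearMap, fun d => ?_, fun g' hg' => ?_⟩
  · rw [← hg d]
    ext l
    simp
  · rw [← hg_unique (g' ∘ₗ s.toLinearMap) hg']
    ext x
    simp

lemma isMorphism_id (T : RelObstructionTheory φ) : T.IsMorphism T LinearMap.id :=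
  fun _ _ _ _ => (LinearMap.rTensor_id_apply _ _ _).symm

lemma IsMorphism.comp {T₁ T₂ T₃ : RelObstructionTheory φ} {f : T₁.V →ₗ[K] T₂.V}
    {g : T₂.V →ₗ[K] T₃.V} (hg : T₂.IsMorphism T₃ g) (hf : T₁.IsMorphism T₂ f) :
    T₁.IsMorphism T₃ (g ∘ₗ f) := fun e a β h => by
  rw [hg, hf, LinearMap.rTensor_comp_apply]

theorem IsUniversal.exists_linearEquiv {T₁ T₂ : RelObstructionTheory φ} (h₁ : T₁.IsUniversal)
    (h₂ : T₂.IsUniversal) : ∃ ψ : T₁.V ≃ₗ[K] T₂.V, T₁.IsMorphism T₂ ψ.toLinearMap := by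
  obtain ⟨f, hf, -⟩ := h₁ T₂
  obtain ⟨g, hg, -⟩ := h₂ T₁
  exact ⟨LinearEquiv.ofLinearMap f g ((h₂ T₂).unique (hf.comp hg) T₂.isMorphism_id)
    ((h₁ T₁).unique (hg.comp hf) T₁.isMorphism_id), hf⟩

end RelObstructionTheory

end UniversalObstruction

theorem exists_universal_relObstructionTheory_general {K : Type u} [Field K]
    {F G : ArtinAlg K ⥤ Type u} (φ : F ⟶ G) :
    (∃ ROT : RelObstructionTheory φ, ROT.IsUniversal) ∧
    (∀ ROT₁ ROT₂ : RelObstructionTheory φ, ROT₁.IsUniversal → ROT₂.IsUniversal →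
      ∃ ψ : ROT₁.V ≃ₗ[K] ROT₂.V,
        RelObstructionTheory.IsMorphism ROT₁ ROT₂ ψ.toLinearMap) :=
  ⟨RelObstructionTheory.exists_isUniversal φ, fun _ _ h₁ h₂ => h₁.exists_linearEquiv h₂⟩

/-- Every morphism `φ : F → G` of deformation functors admits a universal
relative obstruction theory, and it is unique up to isomorphism of relative obstruction
theories. -/
theorem exists_universal_relObstructionTheory {K : Type u} [Field K]
    {F G : ArtinAlg K ⥤ Type u} (hF : IsDeformationFunctor F) (hG : IsDeformationFunctor G)
    (φ : F ⟶ G) :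
    (∃ ROT : RelObstructionTheory φ, ROT.IsUniversal) ∧
    (∀ ROT₁ ROT₂ : RelObstructionTheory φ, ROT₁.IsUniversal → ROT₂.IsUniversal →
      ∃ ψ : ROT₁.V ≃ₗ[K] ROT₂.V,
        RelObstructionTheory.IsMorphism ROT₁ ROT₂ ψ.toLinearMap) :=
  exists_universal_relObstructionTheory_general φ
end
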